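/- Let w_e > 0 and let σ̂_{e,h} : ℝᵈ → ℝᵈ (e = 1,…,m; h ∈ ℕ) be continuous functions. Let B_e : ℝⁿ → ℝᵈ be linear maps and f ∈ ℝⁿ. Assume: (i) uniform material stability: there exist a > 0, b ≥ 0 independent of h with σ̂_{e,h}(ε)·ε ≥ a‖ε‖_e² − b for all ε; (ii) structural stability: there is c > 0 with ‖u‖² ≤ c Σ_e w_e‖B_e u‖_e² for all u ∈ ℝⁿ; (iii) for each e, σ̂_{e,h} converges as h → ∞ to a function σ̂_e uniformly on compact subsets of ℝᵈ. Then for each h the approximating problem Σ_e w_e σ̂_{e,h}(B_e u_h)·(B_e v) = f·v for all v has a solution u_h*, and a subsequence of (u_h*) converges to a point u* which solves the limiting problem Σ_e w_e σ̂_e(B_e u*)·(B_e v) = f·v for all v. -/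

import Mathlib

open Matrix Filter Topology
open Polynomial in
theorem det_poly {E : Type*} [NormedAddCommGroup E] [InnerProductSpace ℝ E] [FiniteDimensional ℝ E]
    (A : E →L[ℝ] E) : ∃ p : ℝ[X], p.natDegree ≤ Module.finrank ℝ E ∧
      ∀ t : ℝ, p.eval t = (1 + t • A).det := by
  classical
  let bs := Module.finBasis ℝ E
  let M := LinearMap.toMatrix bs bs (A : E →ₗ[ℝ] E)
  refine ⟨det ((X : ℝ[X]) • M.map C + (1 : Matrix _ _ ℝ).map C), ?_, fun t => ?_⟩
  · simpa using natDegree_det_X_add_C_le M 1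
  · have h1 : (1 + t • A).det = LinearMap.det (LinearMap.id + t • (A : E →ₗ[ℝ] E)) := rfl
    rw [h1, ← LinearMap.det_toMatrix bs, map_add, map_smul, LinearMap.toMatrix_id,
      ← Polynomial.coe_evalRingHom, RingHom.map_det]
    congr 1
    ext i j
    by_cases hij : i = j <;> simp [M, hij, add_comm] <;> ring

theorem det_pos_of_norm_lt {E : Type*} [NormedAddCommGroup E] [InnerProductSpace ℝ E]
    [FiniteDimensional ℝ E] (A : E →L[ℝ] E) (hA : ‖A‖ < 1) : 0 < (1 + A).det := by
  have hne : ∀ s ∈ Set.Icc (0:ℝ) 1, (1 + s • A).det ≠ 0 := by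
    intro s hs h0
    have hs1 : ‖s • A‖ < 1 := by
      rw [norm_smul, Real.norm_of_nonneg hs.1]
      nlinarith [hs.2, norm_nonneg A, hs.1]
    have h0' : LinearMap.det (((1 + s • A : E →L[ℝ] E)) : E →ₗ[ℝ] E) = 0 := h0
    obtain ⟨v, hv, hv0⟩ := (Submodule.ne_bot_iff _).1 (LinearMap.bot_lt_ker_of_det_eq_zero h0').ne'
    have hv' : v + (s • A) v = 0 := by simpa using hv
    have : ‖v‖ = ‖(s • A) v‖ := by
      conv_lhs => rw [eq_neg_of_add_eq_zero_left hv', norm_neg]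
    have h2 := (s • A).le_opNorm v
    have h3 : 0 < ‖v‖ := norm_pos_iff.2 hv0
    nlinarith
  have hc : ContinuousOn (fun s : ℝ => (1 + s • A).det) (Set.Icc 0 1) := by
    apply Continuous.continuousOn
    exact ContinuousLinearMap.continuous_det.comp (by fun_prop)
  by_contra hn
  have := intermediate_value_Icc' (zero_le_one (α := ℝ)) hc
  obtain ⟨s, hs, h⟩ := this (show (0:ℝ) ∈ _ by
    constructor
    · simpa using hn
    · have : ((1 : E →L[ℝ] E)).det = 1 := LinearMap.det_id
      simp [this])
  exact hne s hs h

theorem small_t {E : Type*} [NormedAddCommGroup E] [InnerProductSpace ℝ E]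
    [FiniteDimensional ℝ E] [MeasurableSpace E] [BorelSpace E]
    (h : E → E) (hh : ContDiff ℝ 1 h) (ρ : ℝ) (hρ : 0 < ρ)
    (h0 : ∀ x, ‖x‖ = ρ → h x = 0) (hr : ∀ x, ‖x + h x‖ = ρ)
    (K : NNReal) (hK : ∀ x ∈ Metric.closedBall (0:E) ρ, ‖fderiv ℝ h x‖₊ ≤ K)
    (t : ℝ) (ht0 : 0 ≤ t) (ht1 : t < 1) (htK : t * K < 1) :
    ∫ x in Metric.ball (0:E) ρ, (1 + t • fderiv ℝ h x).det =
      MeasureTheory.volume.real (Metric.ball (0:E) ρ) := by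
  have hlip : LipschitzOnWith K h (Metric.closedBall (0:E) ρ) :=
    (convex_closedBall 0 ρ).lipschitzOnWith_of_nnnorm_fderiv_le
      (fun x _ => (hh.differentiable one_ne_zero) x) hK
  let g : E → E := fun x => x + t • h x
  let h' : E → E := fun x => open Classical in if ‖x‖ ≤ ρ then h x else 0
  have hcross : ∀ x y : E, ‖x‖ ≤ ρ → ρ < ‖y‖ → ‖h x‖ ≤ K * ‖x - y‖ := by
    intro x y hx hy
    have hc : ContinuousOn (fun s : ℝ => ‖AffineMap.lineMap x y s‖) (Set.Icc (0:ℝ) 1) := by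
      apply Continuous.continuousOn
      exact (AffineMap.lineMap_continuous).norm
    obtain ⟨s, hs, hs2⟩ := intermediate_value_Icc (zero_le_one (α := ℝ)) hc
      (show ρ ∈ _ by simp; exact ⟨hx, hy.le⟩)
    simp only at hs2
    have := hlip.dist_le_mul x (by simpa using hx) (AffineMap.lineMap x y s)
      (by simpa using hs2.le)
    rw [h0 _ hs2, dist_zero_right, dist_left_lineMap, Real.norm_of_nonneg hs.1, dist_eq_norm] at this
    refine this.trans ?_
    have : 0 ≤ ‖x - y‖ := norm_nonneg _
    gcongr
    nlinarith [hs.2]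
  have hlip' : LipschitzWith K h' := by
    apply LipschitzWith.of_dist_le_mul
    intro x y
    rw [dist_eq_norm, dist_eq_norm]
    by_cases hx : ‖x‖ ≤ ρ <;> by_cases hy : ‖y‖ ≤ ρ <;> simp only [h', hx, hy, if_true, if_false]
    · rw [← dist_eq_norm, ← dist_eq_norm]
      exact hlip.dist_le_mul x (by simpa using hx) y (by simpa using hy)
    · simpa using hcross x y hx (not_le.1 hy)
    · simpa [norm_sub_rev] using hcross y x hy (not_le.1 hx)
    · simp; positivity
  have hinj : Set.InjOn g (Metric.ball 0 ρ) := by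
    intro x hx y hy hxy
    by_contra hne
    have h1 := hlip.dist_le_mul x (Metric.ball_subset_closedBall hx) y
      (Metric.ball_subset_closedBall hy)
    rw [dist_eq_norm, dist_eq_norm] at h1
    have h2 : x - y = - (t • (h x - h y)) := by
      simp only [g] at hxy
      rw [smul_sub, neg_sub, sub_eq_sub_iff_add_eq_add, hxy, add_comm]
    have h3 : ‖x - y‖ = t * ‖h x - h y‖ := by
      conv_lhs => rw [h2]
      rw [norm_neg, norm_smul, Real.norm_of_nonneg ht0]
    have h4 : 0 < ‖x - y‖ := norm_pos_iff.2 (sub_ne_zero.2 hne)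
    nlinarith
  have himg : g '' (Metric.ball 0 ρ) = Metric.ball 0 ρ := by
    apply Set.Subset.antisymm
    · rintro _ ⟨x, hx, rfl⟩
      simp only [Metric.mem_ball, dist_zero_right] at hx ⊢
      have : g x = (1 - t) • x + t • (x + h x) := by simp only [g]; module
      rw [this]
      calc _ ≤ ‖(1 - t) • x‖ + ‖t • (x + h x)‖ := norm_add_le _ _
        _ = (1 - t) * ‖x‖ + t * ρ := by
          rw [norm_smul, norm_smul, hr, Real.norm_of_nonneg ht0,
            Real.norm_of_nonneg (by linarith)]
        _ < ρ := by nlinarith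
    · intro y hy
      let T : E → E := fun x => y - t • h' x
      have hT : ContractingWith (t.toNNReal * K) T := by
        refine ⟨by
          rw [← NNReal.coe_lt_coe]
          simpa [Real.coe_toNNReal t ht0] using htK, ?_⟩
        apply LipschitzWith.of_dist_le_mul
        intro a b
        have := hlip'.dist_le_mul a b
        simp only [T, dist_sub_left, dist_smul₀, Real.norm_of_nonneg ht0]
        rw [NNReal.coe_mul, Real.coe_toNNReal t ht0, mul_assoc]
        exact mul_le_mul_of_nonneg_left this ht0
      have hfix := hT.fixedPoint_isFixedPt
      set x := hT.fixedPoint T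
      have hx : y - t • h' x = x := hfix
      simp only [Metric.mem_ball, dist_zero_right] at hy
      have hxlt : ‖x‖ < ρ := by
        by_contra hge
        have : h' x = 0 := by
          simp only [h']
          split_ifs with hle
          · exact h0 x (le_antisymm hle (not_lt.1 hge))
          · rfl
        rw [this] at hx
        simp at hx
        rw [← hx] at hge
        exact hge hy
      refine ⟨x, by simpa using hxlt, ?_⟩
      have : h' x = h x := by simp [h', hxlt.le]
      simp only [g]
      rw [this] at hx
      exact (sub_eq_iff_eq_add.1 hx).symm
  have hder : ∀ x ∈ Metric.ball (0:E) ρ, HasFDerivWithinAt g (1 + t • fderiv ℝ h x)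
      (Metric.ball 0 ρ) x := by
    intro x _
    exact ((hasFDerivAt_id x).add
      (((hh.differentiable one_ne_zero) x).hasFDerivAt.const_smul t)).hasFDerivWithinAt
  have key := MeasureTheory.integral_image_eq_integral_abs_det_fderiv_smul
    (MeasureTheory.volume) Metric.isOpen_ball.measurableSet hder hinj (fun _ => (1:ℝ))
  rw [himg] at key
  simp only [MeasureTheory.integral_const, smul_eq_mul, mul_one,
    MeasureTheory.measureReal_restrict_apply_univ] at key
  rw [key]
  refine MeasureTheory.setIntegral_congr_fun Metric.isOpen_ball.measurableSet fun x hx => ?_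
  refine (abs_of_pos (det_pos_of_norm_lt _ ?_)).symm
  rw [norm_smul, Real.norm_of_nonneg ht0]
  refine lt_of_le_of_lt (mul_le_mul_of_nonneg_left ?_ ht0) htK
  exact_mod_cast hK x (Metric.ball_subset_closedBall hx)

theorem no_retract {E : Type*} [NormedAddCommGroup E] [InnerProductSpace ℝ E]
    [FiniteDimensional ℝ E] [MeasurableSpace E] [BorelSpace E]
    (r : E → E) (hrc : ContDiff ℝ 1 r) (ρ : ℝ) (hρ : 0 < ρ)
    (hid : ∀ x, ‖x‖ = ρ → r x = x) (hr : ∀ x, ‖r x‖ = ρ) : False := by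
  let h : E → E := fun x => r x - x
  have hh : ContDiff ℝ 1 h := hrc.sub contDiff_id
  have hcf : Continuous (fderiv ℝ h) := hh.continuous_fderiv one_ne_zero
  obtain ⟨K₀, hK₀⟩ := (isCompact_closedBall (0:E) ρ).exists_bound_of_continuousOn hcf.continuousOn
  let K : NNReal := K₀.toNNReal
  have hK : ∀ x ∈ Metric.closedBall (0:E) ρ, ‖fderiv ℝ h x‖₊ ≤ K := by
    intro x hx
    exact NNReal.le_toNNReal_of_coe_le (by simpa using hK₀ x hx)
  let N := Module.finrank ℝ E
  let v : ℕ → ℝ := fun j => 1 / ((K + 2) * (j + 1))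
  have hKnn : (0:ℝ) ≤ K := K.2
  have hvpos : ∀ j, 0 < v j := fun j => by positivity
  have hvle : ∀ j, v j * (K + 2) ≤ 1 := by
    intro j
    have : v j * (K + 2) = 1 / (j + 1) := by simp only [v]; field_simp
    rw [this, div_le_one (by positivity)]
    simp
  have hvinj : Set.InjOn v (Finset.range (N + 1)) := by
    intro i _ j _ hij
    simp only [v] at hij
    field_simp at hij
    have : (i:ℝ) = j := by linarith
    exact_mod_cast this
  have hint : ∀ t : ℝ, MeasureTheory.IntegrableOn (fun x => (1 + t • fderiv ℝ h x).det)
      (Metric.ball (0:E) ρ) := by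
    intro t
    have : Continuous (fun x => (1 + t • fderiv ℝ h x).det) :=
      ContinuousLinearMap.continuous_det.comp (by fun_prop)
    exact (this.continuousOn.integrableOn_compact (isCompact_closedBall (0:E) ρ)).mono_set
      Metric.ball_subset_closedBall
  have hsmall : ∀ j, ∫ x in Metric.ball (0:E) ρ, (1 + v j • fderiv ℝ h x).det =
      MeasureTheory.volume.real (Metric.ball (0:E) ρ) := by
    intro j
    have := hvle j
    have := hvpos j
    have : 0 ≤ v j * K := by positivity
    exact small_t h hh ρ hρ (fun x hx => by simp [h, hid x hx]) (fun x => by simp [h, hr]) K hK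
      (v j) (hvpos j).le (by nlinarith) (by nlinarith)
  have hinterp : ∀ A : E →L[ℝ] E, (1 + (1:ℝ) • A).det =
      ∑ j ∈ Finset.range (N + 1), (1 + v j • A).det *
        (Lagrange.basis (Finset.range (N + 1)) v j).eval 1 := by
    intro A
    obtain ⟨p, hp, hpe⟩ := det_poly A
    have := Lagrange.eq_interpolate (s := Finset.range (N + 1)) (v := v) (f := p) hvinj (by
      refine lt_of_le_of_lt Polynomial.degree_le_natDegree ?_
      rw [Finset.card_range]
      exact_mod_cast Nat.lt_succ_of_le hp)
    rw [← hpe, this]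
    simp [Lagrange.interpolate_apply, Polynomial.eval_finsetSum, hpe]
  have hone : ∫ x in Metric.ball (0:E) ρ, (1 + (1:ℝ) • fderiv ℝ h x).det =
      MeasureTheory.volume.real (Metric.ball (0:E) ρ) := by
    simp_rw [hinterp]
    rw [MeasureTheory.integral_finsetSum _ (fun j _ => (hint (v j)).mul_const _)]
    simp_rw [MeasureTheory.integral_mul_const, hsmall, ← Finset.mul_sum]
    rw [← Polynomial.eval_finsetSum, Lagrange.sum_basis hvinj (by simp)]
    simp
  have hzero : ∀ x, (1 + (1:ℝ) • fderiv ℝ h x).det = 0 := by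
    intro x
    have hrd : DifferentiableAt ℝ r x := (hrc.differentiable one_ne_zero) x
    have hfd : (1 + (1:ℝ) • fderiv ℝ h x) = fderiv ℝ r x := by
      have : fderiv ℝ h x = fderiv ℝ r x - 1 :=
        (hrd.hasFDerivAt.sub (hasFDerivAt_id x)).fderiv
      rw [this]; simp
    rw [hfd]
    by_contra hdet
    have hsurj : Function.Surjective (fderiv ℝ r x) := by
      have hu : IsUnit (LinearMap.det (fderiv ℝ r x : E →ₗ[ℝ] E)) := isUnit_iff_ne_zero.2 hdet
      have hu2 : IsUnit (fderiv ℝ r x : E →ₗ[ℝ] E) := (LinearMap.isUnit_iff_isUnit_det _).2 hu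
      exact ((Module.End.isUnit_iff _).1 hu2).2
    obtain ⟨u, hu⟩ := hsurj (r x)
    have h1 := hrd.hasFDerivAt.inner ℝ hrd.hasFDerivAt
    have h2 : (fun y => inner ℝ (r y) (r y)) = fun _ => ρ ^ 2 := by
      ext y; rw [real_inner_self_eq_norm_sq, hr]
    rw [h2] at h1
    have h3 := congrArg (fun L => L u) (h1.unique (hasFDerivAt_const (ρ ^ 2) x))
    simp [hu] at h3
    have := hr x
    simp [h3] at this
    linarith
  simp_rw [hzero] at hone
  simp only [MeasureTheory.integral_zero] at hone
  have : 0 < MeasureTheory.volume.real (Metric.ball (0:E) ρ) :=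
    ENNReal.toReal_pos (Metric.measure_ball_pos _ _ hρ).ne' MeasureTheory.measure_ball_lt_top.ne
  linarith

theorem exists_zero {E : Type*} [NormedAddCommGroup E] [InnerProductSpace ℝ E]
    [FiniteDimensional ℝ E] (F : E → E) (hF : Continuous F) (R : ℝ) (hR : 0 < R)
    (hpos : ∀ x, R ≤ ‖x‖ → 0 < inner ℝ (F x) x) : ∃ x, F x = 0 := by
  let _ : MeasurableSpace E := borel E
  have _ : BorelSpace E := ⟨rfl⟩
  by_contra! hne
  obtain ⟨G, hG, hGF, -⟩ := hF.exists_contDiff_approx 1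
    (ε := fun x => min ‖F x‖ (max (inner ℝ (F x) x / (‖x‖ + 1)) (R - ‖x‖)))
    (by
      refine hF.norm.min (Continuous.max ?_ (by fun_prop))
      exact (hF.inner continuous_id).div (by fun_prop) (fun x => by positivity))
    (by
      intro x
      refine lt_min (norm_pos_iff.2 (hne x)) ?_
      by_cases hx : R ≤ ‖x‖
      · exact lt_max_of_lt_left (div_pos (hpos x hx) (by positivity))
      · exact lt_max_of_lt_right (by linarith))
  have hG0 : ∀ x, G x ≠ 0 := by
    intro x h0
    have := (hGF x).trans_le (min_le_left _ _)
    rw [h0, dist_zero_left] at this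
    exact lt_irrefl _ this
  have hGpos : ∀ x, R ≤ ‖x‖ → 0 < inner ℝ (G x) x := by
    intro x hx
    have h1 := (hGF x).trans_le (min_le_right _ _)
    have hp := hpos x hx
    rw [max_eq_left ((by linarith : R - ‖x‖ ≤ 0).trans (by positivity)), dist_eq_norm,
      lt_div_iff₀ (by positivity)] at h1
    have h2 := abs_le.1 (abs_real_inner_le_norm (G x - F x) x)
    rw [inner_sub_left] at h2
    nlinarith [norm_nonneg (G x - F x), norm_nonneg x]
  let χ : ContDiffBump (0:E) := ⟨R, 2 * R, hR, by linarith⟩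
  let H : E → E := fun x => χ x • G x + (1 - χ x) • x
  have hHc : ContDiff ℝ 1 H := by
    have h1 : ContDiff ℝ 1 χ := χ.contDiff
    exact (h1.smul hG).add ((contDiff_const.sub h1).smul contDiff_id)
  have hH0 : ∀ x, H x ≠ 0 := by
    intro x h0
    by_cases hx : R ≤ ‖x‖
    · have h1 : inner ℝ (H x) x = χ x * inner ℝ (G x) x + (1 - χ x) * ‖x‖ ^ 2 := by
        simp only [H, inner_add_left, real_inner_smul_left, real_inner_self_eq_norm_sq]
      rw [h0, inner_zero_left] at h1
      have h2 := hGpos x hx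
      have h3 : 0 < ‖x‖ ^ 2 := by have := hR.trans_le hx; positivity
      have h4 : 0 ≤ χ x := χ.nonneg
      have h5 : χ x ≤ 1 := χ.le_one
      rcases h4.eq_or_lt with h | h
      · rw [← h] at h1; linarith
      · have : 0 < χ x * inner ℝ (G x) x := mul_pos h h2
        nlinarith
    · have : χ x = 1 := χ.one_of_mem_closedBall (by simpa using (not_le.1 hx).le)
      simp [H, this] at h0
      exact hG0 x h0
  refine no_retract (fun x => (2 * R / ‖H x‖) • H x) ?_ (2 * R) (by linarith) ?_ ?_
  · exact (contDiff_const.div (hHc.norm ℝ hH0) (fun x => norm_ne_zero_iff.2 (hH0 x))).smul hHc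
  · intro x hx
    have h1 : χ x = 0 := χ.zero_of_le_dist (by simp [χ, hx])
    have h2 : H x = x := by simp [H, h1]
    simp only [h2, hx]
    rw [div_self (by linarith), one_smul]
  · intro x
    have := norm_pos_iff.2 (hH0 x)
    rw [norm_smul, Real.norm_of_nonneg (by positivity)]
    field_simp

theorem exists_zero_pi {n : ℕ} (F : (Fin n → ℝ) → (Fin n → ℝ)) (hF : Continuous F) (R : ℝ)
    (hR : 0 < R) (hpos : ∀ x, R ^ 2 ≤ x ⬝ᵥ x → 0 < F x ⬝ᵥ x) : ∃ x, F x = 0 := by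
  obtain ⟨x, hx⟩ := exists_zero (E := EuclideanSpace ℝ (Fin n))
    (fun x => WithLp.toLp 2 (F x.ofLp)) (by fun_prop) R hR (by
      intro x hx
      have h1 := hpos x.ofLp (by
        have : x.ofLp ⬝ᵥ x.ofLp = ‖x‖ ^ 2 := by
          rw [← real_inner_self_eq_norm_sq, EuclideanSpace.inner_eq_star_dotProduct]; simp
        rw [this]; gcongr)
      rw [EuclideanSpace.inner_eq_star_dotProduct]
      simpa [dotProduct_comm] using h1)
  exact ⟨x.ofLp, by simpa using hx⟩

/-- **Approximation.** If the local material laws `σ̂_{e,h}` are continuous, uniformly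
materially stable, converge to limiting laws `σ̂_e` uniformly on compact sets, and the
structure is stable, then each approximating problem `w Bᵀ σ̂_h(B u) = f` (in weak form)
has a solution `u_h*`, and a subsequence of `(u_h*)` converges to a solution `u*` of the
limiting problem `w Bᵀ σ̂(B u) = f`.
The norm `‖·‖_e` on `ℝᵈ` is induced by the symmetric positive-definite matrix `𝔹 e`,
i.e. `‖x‖_e² = (𝔹 e) x ⬝ᵥ x`; norms on `ℝⁿ` are Euclidean. -/
theorem approximation_of_solutions (m d n : ℕ)
    (w : Fin m → ℝ) (hw : ∀ e, 0 < w e)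
    (𝔹 : Fin m → Matrix (Fin d) (Fin d) ℝ) (h𝔹 : ∀ e, (𝔹 e).PosDef)
    (σh : ℕ → Fin m → (Fin d → ℝ) → (Fin d → ℝ))
    (hσh : ∀ h e, Continuous (σh h e))
    (σ : Fin m → (Fin d → ℝ) → (Fin d → ℝ))
    (B : Fin m → (Fin n → ℝ) →ₗ[ℝ] (Fin d → ℝ))
    (f : Fin n → ℝ)
    (a b : ℝ) (ha : 0 < a) (hb : 0 ≤ b)
    (hmat : ∀ h e (ε : Fin d → ℝ),
      a * ((𝔹 e).mulVec ε ⬝ᵥ ε) - b ≤ σh h e ε ⬝ᵥ ε)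
    (c : ℝ) (hc : 0 < c)
    (hstruct : ∀ u : Fin n → ℝ,
      u ⬝ᵥ u ≤ c * ∑ e, w e * ((𝔹 e).mulVec (B e u) ⬝ᵥ (B e u)))
    (hconv : ∀ e (K : Set (Fin d → ℝ)), IsCompact K →
      TendstoUniformlyOn (fun h => σh h e) (σ e) atTop K) :
    ∃ u : ℕ → Fin n → ℝ,
      (∀ h, ∀ v : Fin n → ℝ,
        ∑ e, w e * (σh h e (B e (u h)) ⬝ᵥ (B e v)) = f ⬝ᵥ v) ∧
      ∃ φ : ℕ → ℕ, StrictMono φ ∧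
        ∃ ustar : Fin n → ℝ,
          Tendsto (u ∘ φ) atTop (𝓝 ustar) ∧
          ∀ v : Fin n → ℝ,
            ∑ e, w e * (σ e (B e ustar) ⬝ᵥ (B e v)) = f ⬝ᵥ v := by
  have hK0 : 0 < a / c := div_pos ha hc
  set k := a / c with hk
  set C := b * ∑ e, w e + (f ⬝ᵥ f) / (2 * k) with hC
  have hW : 0 ≤ ∑ e, w e := Finset.sum_nonneg fun e _ => (hw e).le
  have hff : 0 ≤ f ⬝ᵥ f := Finset.sum_nonneg fun i _ => mul_self_nonneg _
  have hC0 : 0 ≤ C := by positivity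
  have hcoer : ∀ h u, k / 2 * (u ⬝ᵥ u) - C ≤
      ∑ e, w e * (σh h e (B e u) ⬝ᵥ (B e u)) - f ⬝ᵥ u := by
    intro h u
    have h1 : ∑ e, w e * (a * ((𝔹 e).mulVec (B e u) ⬝ᵥ (B e u)) - b) ≤
        ∑ e, w e * (σh h e (B e u) ⬝ᵥ (B e u)) :=
      Finset.sum_le_sum fun e _ => mul_le_mul_of_nonneg_left (hmat h e _) (hw e).le
    have h2 : ∑ e, w e * (a * ((𝔹 e).mulVec (B e u) ⬝ᵥ (B e u)) - b) =
        a * ∑ e, w e * ((𝔹 e).mulVec (B e u) ⬝ᵥ (B e u)) - b * ∑ e, w e := by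
      rw [Finset.mul_sum, Finset.mul_sum, ← Finset.sum_sub_distrib]
      exact Finset.sum_congr rfl fun e _ => by ring
    have h3 : k * (u ⬝ᵥ u) ≤ a * ∑ e, w e * ((𝔹 e).mulVec (B e u) ⬝ᵥ (B e u)) := by
      have := mul_le_mul_of_nonneg_left (hstruct u) hK0.le
      refine this.trans (le_of_eq ?_)
      rw [hk]; field_simp
    have h4 : 0 ≤ (k • u - f) ⬝ᵥ (k • u - f) :=
      Finset.sum_nonneg fun i _ => mul_self_nonneg _
    have h5 : (k • u - f) ⬝ᵥ (k • u - f) =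
        k * k * (u ⬝ᵥ u) - 2 * k * (f ⬝ᵥ u) + f ⬝ᵥ f := by
      simp only [sub_dotProduct, dotProduct_sub, smul_dotProduct, dotProduct_smul, smul_eq_mul,
        dotProduct_comm u f]
      ring
    have h6 : f ⬝ᵥ u ≤ k / 2 * (u ⬝ᵥ u) + (f ⬝ᵥ f) / (2 * k) := by
      have : k / 2 * (u ⬝ᵥ u) + (f ⬝ᵥ f) / (2 * k) - f ⬝ᵥ u =
          (k * k * (u ⬝ᵥ u) - 2 * k * (f ⬝ᵥ u) + f ⬝ᵥ f) / (2 * k) := by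
        field_simp
        ring
      have h7 : 0 ≤ (k * k * (u ⬝ᵥ u) - 2 * k * (f ⬝ᵥ u) + f ⬝ᵥ f) / (2 * k) :=
        div_nonneg (h5 ▸ h4) (by positivity)
      linarith
    linarith
  set M := C / (k / 2) with hM
  have hM0 : 0 ≤ M := by positivity
  have hMC : k / 2 * M = C := by rw [hM]; field_simp
  have hBc : ∀ e, Continuous (B e) := fun e => (B e).continuous_of_finiteDimensional
  have hsol : ∀ h, ∃ u : Fin n → ℝ, ∀ v : Fin n → ℝ,
      ∑ e, w e * (σh h e (B e u) ⬝ᵥ (B e v)) = f ⬝ᵥ v := by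
    intro h
    let F : (Fin n → ℝ) → (Fin n → ℝ) := fun u i =>
      ∑ e, w e * (σh h e (B e u) ⬝ᵥ (B e (Pi.single i 1))) - f i
    have hFv : ∀ u v, F u ⬝ᵥ v = ∑ e, w e * (σh h e (B e u) ⬝ᵥ (B e v)) - f ⬝ᵥ v := by
      intro u v
      have hB : ∀ e, B e v = ∑ i, v i • B e (Pi.single i 1) := by
        intro e
        conv_lhs => rw [pi_eq_sum_univ' v]
        simp only [map_sum, map_smul]
      have hB2 : ∀ e, σh h e (B e u) ⬝ᵥ (B e v) =
          ∑ i, v i * (σh h e (B e u) ⬝ᵥ B e (Pi.single i 1)) := by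
        intro e
        rw [hB e, dotProduct_sum]
        simp only [dotProduct_smul, smul_eq_mul]
      simp only [hB2]
      simp only [dotProduct.eq_1 (F u), dotProduct.eq_1 f, F, sub_mul, Finset.sum_sub_distrib,
        Finset.sum_mul, Finset.mul_sum]
      rw [Finset.sum_comm]
      congr 1
      exact Finset.sum_congr rfl fun e _ => Finset.sum_congr rfl fun i _ => by ring
    have hFc : Continuous F := by
      refine continuous_pi fun i => ?_
      refine Continuous.sub ?_ continuous_const
      refine continuous_finsetSum _ fun e _ => continuous_const.mul ?_
      exact ((hσh h e).comp (hBc e)).dotProduct continuous_const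
    obtain ⟨u, hu⟩ := exists_zero_pi F hFc (M + 1) (by positivity) (by
      intro x hx
      rw [hFv]
      refine lt_of_lt_of_le ?_ (hcoer h x)
      have : M < x ⬝ᵥ x := by nlinarith
      have := mul_lt_mul_of_pos_left this (half_pos hK0)
      linarith)
    refine ⟨u, fun v => ?_⟩
    have := hFv u v
    rw [hu, zero_dotProduct] at this
    linarith
  choose u hu using hsol
  refine ⟨u, hu, ?_⟩
  have hbd : ∀ h, u h ∈ Metric.closedBall (0 : Fin n → ℝ) (M + 1) := by
    intro h
    have h1 := hcoer h (u h)
    rw [hu h (u h), sub_self] at h1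
    have h2 : u h ⬝ᵥ u h ≤ M := by
      rw [hM, le_div_iff₀ (by positivity)]
      linarith
    rw [mem_closedBall_zero_iff, pi_norm_le_iff_of_nonneg (by positivity)]
    intro i
    have h3 : u h i * u h i ≤ u h ⬝ᵥ u h :=
      Finset.single_le_sum (f := fun i => u h i * u h i) (fun i _ => mul_self_nonneg _)
        (Finset.mem_univ i)
    rw [Real.norm_eq_abs]
    have h4 : u h i ^ 2 ≤ (M + 1) ^ 2 := by nlinarith
    exact abs_le_of_sq_le_sq h4 (by positivity)
  obtain ⟨ustar, -, φ, hφ, hlim⟩ :=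
    (isCompact_closedBall (0 : Fin n → ℝ) (M + 1)).tendsto_subseq hbd
  refine ⟨φ, hφ, ustar, hlim, fun v => ?_⟩
  have hloc : ∀ e, TendstoLocallyUniformly (fun h => σh h e) (σ e) atTop := fun e =>
    tendstoLocallyUniformly_iff_forall_isCompact.2 (hconv e)
  have hσc : ∀ e, Continuous (σ e) := fun e =>
    (hloc e).continuous (Frequently.of_forall fun h => hσh h e)
  have hpt : ∀ e, Tendsto (fun j => σh (φ j) e (B e (u (φ j)))) atTop (𝓝 (σ e (B e ustar))) := by
    intro e
    have h1 : TendstoLocallyUniformly (fun j => σh (φ j) e) (σ e) atTop := by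
      intro s hs x
      obtain ⟨t, ht, hev⟩ := hloc e s hs x
      exact ⟨t, ht, hφ.tendsto_atTop.eventually hev⟩
    exact h1.tendsto_comp (hσc e).continuousAt (((hBc e).tendsto ustar).comp hlim)
  have hT : Tendsto (fun j => ∑ e, w e * (σh (φ j) e (B e (u (φ j))) ⬝ᵥ (B e v))) atTop
      (𝓝 (∑ e, w e * (σ e (B e ustar) ⬝ᵥ (B e v)))) := by
    refine tendsto_finsetSum _ fun e _ => Tendsto.const_mul _ ?_
    have hcd : Continuous fun x : Fin d → ℝ => x ⬝ᵥ B e v :=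
      continuous_id.dotProduct continuous_const
    exact (hcd.tendsto _).comp (hpt e)
  refine tendsto_nhds_unique hT ?_
  simp only [hu]
  exact tendsto_const_nhds
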